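/- There exist positive constants ε₀ and C such that if ε ∈ (0,ε₀), φ ∈ C²(S) ∩ C(S̄) and g ∈ C(S) satisfy -ε⁴Δφ + w₁²φ = g in S and φ = 0 on ∂S, then ‖φ‖_{L∞(S)} ≤ C ε^{-2} ‖g‖_{L∞(S)}. -/

import Mathlib

open Metric Set Filter Topology

noncomputable section

/-- The Euclidean Laplacian of a real-valued function. -/
def lap {N : ℕ} (f : EuclideanSpace ℝ (Fin N) → ℝ) (x : EuclideanSpace ℝ (Fin N)) : ℝ :=
  ∑ i : Fin N, iteratedFDeriv ℝ 2 f x (fun _ => EuclideanSpace.single i 1)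

/-
Since `w₁` vanishes on `B` and grows linearly off it, Baire's theorem shows that `∇w₁` does not
vanish at any point of `B`. A partition of unity then gives a `C¹` field `X` with `∂w₁/∂X` bounded
below wherever `w₁` is small. Integrating `div (w₁ v² X)` yields a Hardy inequality
`s ∫ v² ≲ s² ∫ |∇v|² + ∫ w₁² v²`, `s = ε²`, which survives the insertion of a weight varying slowly
at the scale `ε`. Combined with the energy inequality of the equation it bounds weighted averages of
a compactly supported subsolution `v` at the scale `ε` by `K / ε²`. As `Δv ≥ -K / ε⁴`, a mean value
inequality at that scale turns the averages into pointwise bounds. Finally `±φ` is reduced to a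
compactly supported subsolution by the truncation `(φ - max φ / 2)₊³`.
-/

section

open MeasureTheory InnerProductSpace Laplacian
open scoped Gradient RealInnerProductSpace

section Divergence

variable {V : Type*} [NormedAddCommGroup V] [NormedSpace ℝ V] {X : V → V} {x : V}

/-- The divergence `div X = tr (DX)` of a vector field on a finite-dimensional space. -/
def divergence (X : V → V) (x : V) : ℝ :=
  LinearMap.trace ℝ V (fderiv ℝ X x)

theorem divergence_eq_zero_of_notMem_tsupport (hx : x ∉ tsupport X) : divergence X x = 0 := by
  rw [divergence, fderiv_of_notMem_tsupport ℝ hx]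
  exact map_zero _

theorem divergence_comp_add_smul (hX : Differentiable ℝ X) (x₀ : V) (t : ℝ) (y : V) :
    divergence (fun y ↦ X (x₀ + t • y)) y = t * divergence X (x₀ + t • y) := by
  have haff : HasFDerivAt (fun y : V ↦ x₀ + t • y) (t • ContinuousLinearMap.id ℝ V) y :=
    ((hasFDerivAt_id y).const_smul t).const_add x₀
  have hcomp : HasFDerivAt (fun y ↦ X (x₀ + t • y)) _ y := (hX _).hasFDerivAt.comp y haff
  rw [divergence, hcomp.fderiv, ContinuousLinearMap.comp_smul, ContinuousLinearMap.comp_id,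
    ContinuousLinearMap.toLinearMap_smul, map_smul, smul_eq_mul, divergence]

variable [FiniteDimensional ℝ V]

theorem divergence_smul {f : V → ℝ} (hf : DifferentiableAt ℝ f x) (hX : DifferentiableAt ℝ X x) :
    divergence (fun y ↦ f y • X y) x = f x * divergence X x + fderiv ℝ f x (X x) := by
  have htrace : LinearMap.trace ℝ V ((fderiv ℝ f x).smulRight (X x)) = fderiv ℝ f x (X x) :=
    LinearMap.trace_smulRight (fderiv ℝ f x).toLinearMap (X x)
  simp only [divergence, fderiv_fun_smul hf hX, ContinuousLinearMap.toLinearMap_add,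
    ContinuousLinearMap.toLinearMap_smul, map_add, map_smul, smul_eq_mul, htrace]

theorem continuous_divergence (hX : ContDiff ℝ 1 X) : Continuous (divergence X) :=
  (LinearMap.continuous_of_finiteDimensional
    (LinearMap.trace ℝ V ∘ₗ ContinuousLinearMap.coeLM ℝ)).comp (hX.continuous_fderiv one_ne_zero)

end Divergence

section Gradient

variable {F : Type*} [NormedAddCommGroup F] [InnerProductSpace ℝ F] [CompleteSpace F]
  {f : F → ℝ} {x : F}

theorem norm_gradient (f : F → ℝ) (x : F) : ‖∇ f x‖ = ‖fderiv ℝ f x‖ :=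
  (toDual ℝ F).symm.norm_map _

theorem fderiv_apply_gradient (f : F → ℝ) (x : F) : fderiv ℝ f x (∇ f x) = ‖fderiv ℝ f x‖ ^ 2 := by
  rw [← inner_gradient_left, real_inner_self_eq_norm_sq, norm_gradient]

theorem gradient_comp {h : ℝ → ℝ} (hh : DifferentiableAt ℝ h (f x)) (hf : DifferentiableAt ℝ f x) :
    ∇ (h ∘ f) x = deriv h (f x) • ∇ f x := by
  rw [gradient, gradient, (hh.hasDerivAt.comp_hasFDerivAt x hf.hasFDerivAt).fderiv, map_smul]

theorem contDiff_gradient {n : ℕ} (hf : ContDiff ℝ (n + 1) f) : ContDiff ℝ n (∇ f) :=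
  (toDual ℝ F).symm.contDiff.comp (hf.fderiv_right le_rfl)

end Gradient

variable {E : Type*} [NormedAddCommGroup E] [InnerProductSpace ℝ E] [FiniteDimensional ℝ E]

section Laplacian

variable {f : E → ℝ} {x : E}

theorem divergence_gradient (hf : DifferentiableAt ℝ (fderiv ℝ f) x) :
    divergence (∇ f) x = Δ f x := by
  let b := stdOrthonormalBasis ℝ E
  have hgrad : HasFDerivAt (∇ f)
      ((toDual ℝ E).symm.toContinuousLinearEquiv.toContinuousLinearMap.comp
        (fderiv ℝ (fderiv ℝ f) x)) x :=
    (toDual ℝ E).symm.toContinuousLinearEquiv.toContinuousLinearMap.hasFDerivAt.comp x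
      hf.hasFDerivAt
  rw [divergence, LinearMap.trace_eq_sum_inner _ b,
    laplacian_eq_iteratedFDeriv_orthonormalBasis f b, hgrad.fderiv]
  refine Finset.sum_congr rfl fun i _ ↦ ?_
  rw [real_inner_comm, iteratedFDeriv_two_apply]
  exact toDual_symm_apply

theorem laplacian_comp {h : ℝ → ℝ} (hh : ContDiff ℝ 2 h) (hf : ContDiffAt ℝ 2 f x) :
    Δ (h ∘ f) x = deriv (deriv h) (f x) * ‖fderiv ℝ f x‖ ^ 2 + deriv h (f x) * Δ f x := by
  have hfd : DifferentiableAt ℝ f x := hf.differentiableAt two_ne_zero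
  have hf' : DifferentiableAt ℝ (fderiv ℝ f) x :=
    (hf.fderiv_right (m := 1) le_rfl).differentiableAt one_ne_zero
  have hgrad' : DifferentiableAt ℝ (∇ f) x := (toDual ℝ E).symm.differentiableAt.comp x hf'
  have hdh : DifferentiableAt ℝ (deriv h) (f x) :=
    (hh.deriv' (n := 1)).differentiable one_ne_zero _
  have hgrad : ∇ (h ∘ f) =ᶠ[𝓝 x] fun y ↦ (deriv h ∘ f) y • ∇ f y := by
    filter_upwards [hf.eventually (by simp)] with y hy
    exact gradient_comp (hh.differentiable two_ne_zero _) (hy.differentiableAt two_ne_zero)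
  have hcomp : DifferentiableAt ℝ (fderiv ℝ (h ∘ f)) x :=
    ((hh.contDiffAt.comp x hf).fderiv_right (m := 1) le_rfl).differentiableAt one_ne_zero
  rw [← divergence_gradient hcomp, divergence, hgrad.fderiv_eq, ← divergence,
    divergence_smul (hdh.comp x hfd) hgrad', divergence_gradient hf',
    (hdh.hasDerivAt.comp_hasFDerivAt x hfd.hasFDerivAt).fderiv,
    smul_apply, fderiv_apply_gradient, Function.comp_apply, smul_eq_mul,
    add_comm]

end Laplacian

section DivergenceTheorem

variable [MeasurableSpace E] [BorelSpace E]

theorem integral_fderiv_apply_eq_zero {f : E → ℝ} (hf : ContDiff ℝ 1 f)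
    (hsupp : HasCompactSupport f) (v : E) : ∫ x, fderiv ℝ f x v = 0 := by
  have hint : Integrable fun x ↦ fderiv ℝ f x v :=
    ((hf.continuous_fderiv one_ne_zero).clm_apply continuous_const).integrable_of_hasCompactSupport
      (hsupp.fderiv_apply ℝ v)
  simpa using integral_mul_fderiv_eq_neg_fderiv_mul_of_integrable (μ := volume)
    (f := fun _ : E ↦ (1 : ℝ)) (g := f) (v := v) (by simp) (by simpa using hint)
    (by simpa using hf.continuous.integrable_of_hasCompactSupport hsupp)
    (fun x _ ↦ differentiableAt_const 1) (fun x _ ↦ hf.differentiable one_ne_zero x)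

theorem integrable_divergence {X : E → E} (hX : ContDiff ℝ 1 X) (hsupp : HasCompactSupport X) :
    Integrable (divergence X) :=
  (continuous_divergence hX).integrable_of_hasCompactSupport <|
    (hsupp.fderiv ℝ).comp_left (g := fun T : E →L[ℝ] E ↦ LinearMap.trace ℝ E T) (map_zero _)

theorem integral_divergence_eq_zero {X : E → E} (hX : ContDiff ℝ 1 X)
    (hsupp : HasCompactSupport X) : ∫ x, divergence X x = 0 := by
  let b := stdOrthonormalBasis ℝ E
  have hcoord (i) : ContDiff ℝ 1 fun y ↦ ⟪b i, X y⟫ := contDiff_const.inner ℝ hX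
  have hcoord_supp (i) : HasCompactSupport fun y ↦ ⟪b i, X y⟫ :=
    hsupp.comp_left (g := fun z ↦ ⟪b i, z⟫) (inner_zero_right _)
  have hsum : divergence X = fun x ↦ ∑ i, fderiv ℝ (fun y ↦ ⟪b i, X y⟫) x (b i) := by
    funext x
    rw [divergence, LinearMap.trace_eq_sum_inner _ b]
    refine Finset.sum_congr rfl fun i _ ↦ ?_
    rw [fderiv_inner_apply ℝ (differentiableAt_const _) (hX.differentiable one_ne_zero x)]
    simp
  rw [hsum, integral_finsetSum _ fun i _ ↦
    (((hcoord i).continuous_fderiv one_ne_zero).clm_apply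
      continuous_const).integrable_of_hasCompactSupport ((hcoord_supp i).fderiv_apply ℝ (b i))]
  exact Finset.sum_eq_zero fun i _ ↦ integral_fderiv_apply_eq_zero (hcoord i) (hcoord_supp i) (b i)

end DivergenceTheorem

/-- `u` is a pointwise subsolution on `S` of the Schrödinger equation `-aΔu + qu = K`. -/
def IsSubsolutionOn (a : ℝ) (q : E → ℝ) (K : ℝ) (u : E → ℝ) (S : Set E) : Prop :=
  ∀ x ∈ S, -a * Δ u x + q x * u x ≤ K

/-- The `C¹` field `X` crosses the zero set of `w` transversally, in the quantitative form
`1 ≤ ∂w/∂X + A w²` on `S`; the constant `A` also bounds `X` and its divergence there. -/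
structure IsTransversalOn (X : E → E) (w : E → ℝ) (A : ℝ) (S : Set E) : Prop where
  contDiff : ContDiff ℝ 1 X
  nonneg : 0 ≤ A
  norm_le : ∀ x ∈ S, ‖X x‖ ≤ A
  abs_divergence_le : ∀ x ∈ S, |divergence X x| ≤ A
  one_le : ∀ x ∈ S, 1 ≤ fderiv ℝ w x (X x) + A * w x ^ 2

/-- A positive `C¹` weight whose logarithm has gradient at most `κ`; energy inequalities survive
multiplication by such a weight. -/
structure IsSlowlyVarying (k : E → ℝ) (κ : ℝ) : Prop where
  contDiff : ContDiff ℝ 1 k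
  pos : ∀ x, 0 < k x
  norm_fderiv_le : ∀ x, ‖fderiv ℝ k x‖ ≤ κ * k x

section Energy

variable {X : E → E} {w k v q : E → ℝ} {A K a s κ : ℝ} {S : Set E} {x : E}

theorem abs_mul_mul_le_quarter_add {s m k A p t b : ℝ} (hs : 0 ≤ s) (hk : 0 ≤ k)
    (hm : s * m ^ 2 ≤ 1) (hb : |b| ≤ m * k * A) :
    |s * (p * t * b)| ≤ k * (s * (t ^ 2 / 4) + A ^ 2 * p ^ 2) := by
  have hyoung : m * A * |p| * |t| ≤ t ^ 2 / 4 + (m * A * |p|) ^ 2 := by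
    nlinarith [sq_nonneg (m * A * |p| - |t| / 2), sq_abs t]
  calc |s * (p * t * b)| = s * (|p| * |t|) * |b| := by
        simp only [abs_mul, abs_of_nonneg hs]; ring
    _ ≤ s * (|p| * |t|) * (m * k * A) := by gcongr
    _ = s * k * (m * A * |p| * |t|) := by ring
    _ ≤ s * k * (t ^ 2 / 4 + (m * A * |p|) ^ 2) := by gcongr
    _ = k * (s * (t ^ 2 / 4) + s * m ^ 2 * (A ^ 2 * p ^ 2)) := by
        rw [mul_pow _ |p|, sq_abs]; ring
    _ ≤ k * (s * (t ^ 2 / 4) + A ^ 2 * p ^ 2) := by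
        gcongr k * (_ + ?_); exact mul_le_of_le_one_left (by positivity) hm

theorem divergence_weight_smul (hk : DifferentiableAt ℝ k x) (hw : DifferentiableAt ℝ w x)
    (hv : DifferentiableAt ℝ v x) (hX : DifferentiableAt ℝ X x) :
    divergence (fun y ↦ (k y * (w y * v y ^ 2)) • X y) x =
      k x * v x ^ 2 * fderiv ℝ w x (X x) + k x * w x * v x ^ 2 * divergence X x +
        w x * v x ^ 2 * fderiv ℝ k x (X x) + 2 * (k x * w x * v x * fderiv ℝ v x (X x)) := by
  have hprod := hk.hasFDerivAt.fun_mul (hw.hasFDerivAt.fun_mul (hv.hasFDerivAt.pow 2))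
  rw [divergence_smul hprod.differentiableAt hX, hprod.fderiv]
  simp only [add_apply, smul_apply, smul_eq_mul, nsmul_eq_mul]
  push_cast
  ring

theorem divergence_weight_smul_gradient (hk : DifferentiableAt ℝ k x) (hv : ContDiffAt ℝ 2 v x) :
    divergence (fun y ↦ (k y * v y) • ∇ v y) x =
      k x * v x * Δ v x + v x * fderiv ℝ k x (∇ v x) + k x * ‖fderiv ℝ v x‖ ^ 2 := by
  have hv' : DifferentiableAt ℝ (fderiv ℝ v) x :=
    (hv.fderiv_right (m := 1) le_rfl).differentiableAt one_ne_zero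
  have hgrad : DifferentiableAt ℝ (∇ v) x := (toDual ℝ E).symm.differentiableAt.comp x hv'
  have hprod := hk.hasFDerivAt.fun_mul (hv.differentiableAt two_ne_zero).hasFDerivAt
  rw [divergence_smul hprod.differentiableAt hgrad, hprod.fderiv, divergence_gradient hv',
    ← fderiv_apply_gradient]
  simp only [add_apply, smul_apply, smul_eq_mul]
  ring

theorem IsTransversalOn.hardy_le (hX : IsTransversalOn X w A S) (hk : IsSlowlyVarying k κ)
    (hx : x ∈ S) (hw : DifferentiableAt ℝ w x) (hv : DifferentiableAt ℝ v x) (hs₀ : 0 ≤ s)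
    (hs₁ : s ≤ 1) (hκ : s * κ ^ 2 ≤ 1) :
    s / 2 * (k x * v x ^ 2) ≤ s * divergence (fun y ↦ (k y * (w y * v y ^ 2)) • X y) x +
      k x * (s ^ 2 * ‖fderiv ℝ v x‖ ^ 2 + (A + 3 * A ^ 2) * (w x * v x) ^ 2) := by
  have hkx := (hk.pos x).le
  have hA := hX.nonneg
  have hnorm := hX.norm_le x hx
  have hdiv : |s * (w x * v x * v x * (k x * divergence X x))| ≤
      k x * (s * (v x ^ 2 / 4) + A ^ 2 * (w x * v x) ^ 2) := by
    refine abs_mul_mul_le_quarter_add (m := 1) hs₀ hkx (by simpa using hs₁) ?_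
    rw [abs_mul, abs_of_nonneg hkx, one_mul]
    gcongr
    exact hX.abs_divergence_le x hx
  have hweight : |s * (w x * v x * v x * fderiv ℝ k x (X x))| ≤
      k x * (s * (v x ^ 2 / 4) + A ^ 2 * (w x * v x) ^ 2) :=
    abs_mul_mul_le_quarter_add hs₀ hkx hκ <|
      (fderiv ℝ k x).le_of_opNorm_le_of_le (hk.norm_fderiv_le x) hnorm
  have hgrad : |s * (2 * (k x * w x * v x * fderiv ℝ v x (X x)))| ≤
      k x * (s ^ 2 * ‖fderiv ℝ v x‖ ^ 2 + A ^ 2 * (w x * v x) ^ 2) := by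
    calc |s * (2 * (k x * w x * v x * fderiv ℝ v x (X x)))|
        = 2 * s * k x * |w x * v x| * |fderiv ℝ v x (X x)| := by
          simp only [abs_mul, abs_of_nonneg hs₀, abs_of_nonneg hkx, abs_two]; ring
      _ ≤ 2 * s * k x * |w x * v x| * (‖fderiv ℝ v x‖ * A) := by
          gcongr; exact (fderiv ℝ v x).le_of_opNorm_le_of_le le_rfl hnorm
      _ = k x * (2 * (s * ‖fderiv ℝ v x‖) * (A * |w x * v x|)) := by ring
      _ ≤ k x * ((s * ‖fderiv ℝ v x‖) ^ 2 + (A * |w x * v x|) ^ 2) := by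
          gcongr; exact two_mul_le_add_sq _ _
      _ = k x * (s ^ 2 * ‖fderiv ℝ v x‖ ^ 2 + A ^ 2 * (w x * v x) ^ 2) := by
          rw [mul_pow A, sq_abs]; ring
  have htrans : s * (k x * v x ^ 2) * 1 ≤
      s * (k x * v x ^ 2) * (fderiv ℝ w x (X x) + A * w x ^ 2) := by
    gcongr
    exact hX.one_le x hx
  have hpot : s * (A * k x * (w x * v x) ^ 2) ≤ A * k x * (w x * v x) ^ 2 :=
    mul_le_of_le_one_left (by positivity) hs₁
  rw [divergence_weight_smul (hk.contDiff.differentiable one_ne_zero x) hw hv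
    (hX.contDiff.differentiable one_ne_zero x)]
  linarith [neg_le_of_abs_le hdiv, neg_le_of_abs_le hweight, neg_le_of_abs_le hgrad]

theorem IsSubsolutionOn.caccioppoli_le (hsub : IsSubsolutionOn a q K v S)
    (hk : IsSlowlyVarying k κ) (hx : x ∈ S) (hv : ContDiffAt ℝ 2 v x) (hv₀ : 0 ≤ v x)
    (ha : 0 ≤ a) :
    k x * (a / 2 * ‖fderiv ℝ v x‖ ^ 2 + q x * v x ^ 2) ≤
      a * divergence (fun y ↦ (k y * v y) • ∇ v y) x +
        k x * (K * v x + a / 2 * κ ^ 2 * v x ^ 2) := by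
  have hkx := (hk.pos x).le
  have hcross : -(κ * k x * ‖fderiv ℝ v x‖) ≤ fderiv ℝ k x (∇ v x) :=
    neg_le_of_abs_le <|
      (fderiv ℝ k x).le_of_opNorm_le_of_le (hk.norm_fderiv_le x) (norm_gradient v x).le
  have hcross' := mul_le_mul_of_nonneg_left hcross (mul_nonneg ha hv₀)
  have hyoung := mul_nonneg (mul_nonneg ha hkx) (sq_nonneg (‖fderiv ℝ v x‖ - κ * v x))
  have hpde := mul_le_mul_of_nonneg_left (hsub x hx) (mul_nonneg hkx hv₀)
  rw [divergence_weight_smul_gradient (hk.contDiff.differentiable one_ne_zero x) hv]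
  linarith

theorem IsSubsolutionOn.neg_div_le_laplacian (hsub : IsSubsolutionOn a q K v S)
    (hvS : tsupport v ⊆ S) (hv₀ : ∀ x, 0 ≤ v x) (hK : 0 ≤ K) (ha : 0 < a) (hq : ∀ x, 0 ≤ q x)
    (x : E) : -(K / a) ≤ Δ v x := by
  by_cases hx : x ∈ tsupport v
  · rw [← neg_div, div_le_iff₀ ha]
    linarith [hsub x (hvS hx), mul_nonneg (hq x) (hv₀ x)]
  · rw [(laplacian_congr_nhds (notMem_tsupport_iff_eventuallyEq.1 hx)).eq_of_nhds]
    simp [laplacian_eq_iteratedFDeriv_stdOrthonormalBasis, div_nonneg hK ha.le]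

theorem IsTransversalOn.weight_mul_sq_le (hX : IsTransversalOn X w A S)
    (hk : IsSlowlyVarying k κ) (hx : x ∈ S) (hw : DifferentiableAt ℝ w x)
    (hv : ContDiffAt ℝ 2 v x) (hv₀ : 0 ≤ v x) (hs₀ : 0 ≤ s) (hs₁ : s ≤ 1)
    (hκ : (2 + A + 3 * A ^ 2) * (s * κ ^ 2) ≤ 1 / 2)
    (hsub : IsSubsolutionOn (s ^ 2) (fun x ↦ w x ^ 2) K v S) :
    s / 4 * (k x * v x ^ 2) ≤ s * divergence (fun y ↦ (k y * (w y * v y ^ 2)) • X y) x +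
      (2 + A + 3 * A ^ 2) * s ^ 2 * divergence (fun y ↦ (k y * v y) • ∇ v y) x +
        (2 + A + 3 * A ^ 2) * K * (k x * v x) := by
  have hkx := (hk.pos x).le
  have hA := hX.nonneg
  have hκ₁ : s * κ ^ 2 ≤ 1 := by nlinarith [mul_nonneg hs₀ (sq_nonneg κ)]
  have hhardy := hX.hardy_le hk hx hw (hv.differentiableAt two_ne_zero) hs₀ hs₁ hκ₁
  have hcacc := mul_le_mul_of_nonneg_left (hsub.caccioppoli_le hk hx hv hv₀ (sq_nonneg s))
    (show 0 ≤ 2 + A + 3 * A ^ 2 by positivity)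
  have hgrad : 0 ≤ (A + 3 * A ^ 2) * (k x * (s ^ 2 * ‖fderiv ℝ v x‖ ^ 2)) := by positivity
  have hpot : 0 ≤ k x * (w x * v x) ^ 2 := by positivity
  have habsorb := mul_le_mul_of_nonneg_left hκ
    (show 0 ≤ s / 2 * (k x * v x ^ 2) by positivity)
  linarith

theorem sq_integral_mul_le {α : Type*} [MeasurableSpace α] {μ : Measure α} {k v : α → ℝ}
    (hk₀ : ∀ x, 0 ≤ k x) (hk : Integrable k μ) (hkv : Integrable (fun x ↦ k x * v x) μ)
    (hkv₂ : Integrable (fun x ↦ k x * v x ^ 2) μ) :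
    (∫ x, k x * v x ∂μ) ^ 2 ≤ (∫ x, k x ∂μ) * ∫ x, k x * v x ^ 2 ∂μ := by
  have hquad (t : ℝ) : 0 ≤ (∫ x, k x ∂μ) * (t * t) + -(2 * ∫ x, k x * v x ∂μ) * t +
      ∫ x, k x * v x ^ 2 ∂μ := by
    have hlin : Integrable (fun x ↦ t * t * k x + -(2 * t) * (k x * v x)) μ :=
      (hk.const_mul _).add (hkv.const_mul _)
    calc 0 ≤ ∫ x, k x * (v x - t) ^ 2 ∂μ :=
          integral_nonneg fun x ↦ mul_nonneg (hk₀ x) (sq_nonneg _)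
      _ = ∫ x, (t * t * k x + -(2 * t) * (k x * v x) + k x * v x ^ 2) ∂μ := by congr! 2; ring
      _ = _ := by
        rw [integral_add hlin hkv₂, integral_add (hk.const_mul _) (hkv.const_mul _),
          integral_const_mul, integral_const_mul]
        ring
  have hdiscrim := discrim_le_zero hquad
  rw [discrim] at hdiscrim
  linarith

variable [MeasurableSpace E] [BorelSpace E]

theorem integrable_mul_pow (hk : Continuous k) (hv : Continuous v) (hsupp : HasCompactSupport v)
    {n : ℕ} (hn : n ≠ 0) : Integrable fun x ↦ k x * v x ^ n :=
  (hk.mul (hv.pow n)).integrable_of_hasCompactSupport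
    (hsupp.comp_left (g := (· ^ n)) (zero_pow hn)).mul_left

theorem integral_weight_mul_sq_le (hS : IsOpen S) (hw : ContDiffOn ℝ 1 w S)
    (hX : IsTransversalOn X w A S) (hk : IsSlowlyVarying k κ) (hv : ContDiff ℝ 2 v)
    (hsupp : HasCompactSupport v) (hvS : tsupport v ⊆ S) (hv₀ : ∀ x, 0 ≤ v x)
    (hs₀ : 0 < s) (hs₁ : s ≤ 1) (hκ : (2 + A + 3 * A ^ 2) * (s * κ ^ 2) ≤ 1 / 2)
    (hsub : IsSubsolutionOn (s ^ 2) (fun x ↦ w x ^ 2) K v S) :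
    s / 4 * ∫ x, k x * v x ^ 2 ≤ (2 + A + 3 * A ^ 2) * K * ∫ x, k x * v x := by
  set C := 2 + A + 3 * A ^ 2
  let Y : E → E := fun y ↦ (k y * (w y * v y ^ 2)) • X y
  let Z : E → E := fun y ↦ (k y * v y) • ∇ v y
  have hYsub : tsupport Y ⊆ tsupport v := closure_mono fun y hy hvy ↦ hy (by simp [Y, hvy])
  have hZsub : tsupport Z ⊆ tsupport v := closure_mono fun y hy hvy ↦ hy (by simp [Z, hvy])
  have hYsupp : HasCompactSupport Y := hsupp.of_isClosed_subset (isClosed_tsupport _) hYsub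
  have hZsupp : HasCompactSupport Z := hsupp.of_isClosed_subset (isClosed_tsupport _) hZsub
  have hwS {y : E} (hy : y ∈ tsupport v) : ContDiffAt ℝ 1 w y :=
    hw.contDiffAt (hS.mem_nhds (hvS hy))
  have hv₁ : ContDiff ℝ 1 v := hv.of_le one_le_two
  have hY : ContDiff ℝ 1 Y := contMDiff_iff_contDiff.1 <| contMDiff_of_tsupport fun y hy ↦
    ((hk.contDiff.contDiffAt.mul ((hwS (hYsub hy)).mul (hv₁.contDiffAt.pow 2))).smul
      hX.contDiff.contDiffAt).contMDiffAt
  have hZ : ContDiff ℝ 1 Z := (hk.contDiff.mul hv₁).smul (contDiff_gradient hv)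
  have hpointwise (x : E) : s / 4 * (k x * v x ^ 2) ≤
      s * divergence Y x + C * s ^ 2 * divergence Z x + C * K * (k x * v x) := by
    by_cases hx : x ∈ tsupport v
    · exact hX.weight_mul_sq_le hk (hvS hx) ((hwS hx).differentiableAt one_ne_zero)
        hv.contDiffAt (hv₀ x) hs₀.le hs₁ hκ hsub
    · simp [image_eq_zero_of_notMem_tsupport hx,
        divergence_eq_zero_of_notMem_tsupport fun h ↦ hx (hYsub h),
        divergence_eq_zero_of_notMem_tsupport fun h ↦ hx (hZsub h)]
  have hkv : Integrable fun x ↦ k x * v x := by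
    simpa using integrable_mul_pow hk.contDiff.continuous hv.continuous hsupp one_ne_zero
  have hkv₂ := integrable_mul_pow hk.contDiff.continuous hv.continuous hsupp two_ne_zero
  have hYint := (integrable_divergence hY hYsupp).const_mul s
  have hZint := (integrable_divergence hZ hZsupp).const_mul (C * s ^ 2)
  have hYZint : Integrable fun x ↦ s * divergence Y x + C * s ^ 2 * divergence Z x :=
    hYint.add hZint
  calc s / 4 * ∫ x, k x * v x ^ 2 = ∫ x, s / 4 * (k x * v x ^ 2) :=
        (integral_const_mul _ _).symm
    _ ≤ ∫ x, (s * divergence Y x + C * s ^ 2 * divergence Z x + C * K * (k x * v x)) :=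
        integral_mono (hkv₂.const_mul _) (hYZint.add (hkv.const_mul _)) hpointwise
    _ = C * K * ∫ x, k x * v x := by
        rw [integral_add hYZint (hkv.const_mul _), integral_add hYint hZint]
        simp only [integral_const_mul, integral_divergence_eq_zero hY hYsupp,
          integral_divergence_eq_zero hZ hZsupp, mul_zero, zero_add]

theorem integral_weight_mul_le (hS : IsOpen S) (hw : ContDiffOn ℝ 1 w S)
    (hX : IsTransversalOn X w A S) (hk : IsSlowlyVarying k κ) (hkint : Integrable k)
    (hv : ContDiff ℝ 2 v) (hsupp : HasCompactSupport v) (hvS : tsupport v ⊆ S)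
    (hv₀ : ∀ x, 0 ≤ v x) (hK : 0 ≤ K) (hs₀ : 0 < s) (hs₁ : s ≤ 1)
    (hκ : (2 + A + 3 * A ^ 2) * (s * κ ^ 2) ≤ 1 / 2)
    (hsub : IsSubsolutionOn (s ^ 2) (fun x ↦ w x ^ 2) K v S) :
    ∫ x, k x * v x ≤ 4 * (2 + A + 3 * A ^ 2) * K / s * ∫ x, k x := by
  have hA := hX.nonneg
  have hk₀ (x : E) : 0 ≤ k x := (hk.pos x).le
  have hkv : Integrable fun x ↦ k x * v x := by
    simpa using integrable_mul_pow hk.contDiff.continuous hv.continuous hsupp one_ne_zero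
  have hkv₂ := integrable_mul_pow hk.contDiff.continuous hv.continuous hsupp two_ne_zero
  have henergy : ∫ x, k x * v x ^ 2 ≤ 4 * (2 + A + 3 * A ^ 2) * K / s * ∫ x, k x * v x := by
    rw [div_mul_eq_mul_div, le_div_iff₀ hs₀]
    linarith [integral_weight_mul_sq_le hS hw hX hk hv hsupp hvS hv₀ hs₀ hs₁ hκ hsub]
  have hk_int₀ : 0 ≤ ∫ x, k x := integral_nonneg hk₀
  rcases (integral_nonneg fun x ↦ mul_nonneg (hk₀ x) (hv₀ x) :
    0 ≤ ∫ x, k x * v x).eq_or_lt with hzero | hpos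
  · rw [← hzero]; positivity
  refine le_of_mul_le_mul_right ?_ hpos
  calc (∫ x, k x * v x) * ∫ x, k x * v x = (∫ x, k x * v x) ^ 2 := (sq _).symm
    _ ≤ (∫ x, k x) * ∫ x, k x * v x ^ 2 := sq_integral_mul_le hk₀ hkint hkv hkv₂
    _ ≤ (∫ x, k x) * (4 * (2 + A + 3 * A ^ 2) * K / s * ∫ x, k x * v x) := by gcongr
    _ = _ := by ring

end Energy

section Kernel

/-- The kernel `(1 + ‖y‖²)⁻ᵖ`. It is slowly varying at every scale, and the gradient of the kernel
of exponent `p` is radial with profile the kernel of exponent `p + 1`. -/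
def cauchyKernel {V : Type*} [NormedAddCommGroup V] (p : ℕ) (y : V) : ℝ :=
  ((1 + ‖y‖ ^ 2) ^ p)⁻¹

variable {V : Type*} [NormedAddCommGroup V] (p : ℕ)

theorem cauchyKernel_pos (y : V) : 0 < cauchyKernel p y := by
  unfold cauchyKernel
  positivity

theorem two_mul_norm_mul_cauchyKernel_succ_le (y : V) :
    2 * ‖y‖ * cauchyKernel (p + 1) y ≤ cauchyKernel p y := by
  have hyoung : 2 * ‖y‖ ≤ 1 + ‖y‖ ^ 2 := by nlinarith [sq_nonneg (‖y‖ - 1)]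
  calc 2 * ‖y‖ * cauchyKernel (p + 1) y ≤ (1 + ‖y‖ ^ 2) * cauchyKernel (p + 1) y :=
        mul_le_mul_of_nonneg_right hyoung (cauchyKernel_pos _ y).le
    _ = cauchyKernel p y := by
        simp only [cauchyKernel]
        field_simp
        ring

variable [InnerProductSpace ℝ V]

theorem contDiff_cauchyKernel {n : ℕ∞} : ContDiff ℝ n (cauchyKernel p : V → ℝ) :=
  ((contDiff_const.add (contDiff_norm_sq ℝ)).pow p).inv fun y ↦ by positivity

theorem fderiv_cauchyKernel_apply (y z : V) :
    fderiv ℝ (cauchyKernel p) y z = -(2 * p * ⟪y, z⟫ * cauchyKernel (p + 1) y) := by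
  have hbase : HasFDerivAt (fun y : V ↦ 1 + ‖y‖ ^ 2) (2 • innerSL ℝ y) y :=
    (hasStrictFDerivAt_norm_sq y).hasFDerivAt.const_add 1
  have hpos : 0 < 1 + ‖y‖ ^ 2 := by positivity
  have hkernel : HasFDerivAt (cauchyKernel p) _ y :=
    (hasDerivAt_inv (pow_pos hpos p).ne').comp_hasFDerivAt y (hbase.pow p)
  rw [hkernel.fderiv]
  rcases p with _ | p
  · simp
  · simp only [cauchyKernel, smul_apply, innerSL_apply_apply, smul_eq_mul, nsmul_eq_mul,
      Nat.add_sub_cancel]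
    push_cast
    field_simp
    ring

theorem norm_fderiv_cauchyKernel_le (y : V) :
    ‖fderiv ℝ (cauchyKernel p) y‖ ≤ p * cauchyKernel p y := by
  have hJ := (cauchyKernel_pos (p + 1) y).le
  refine ContinuousLinearMap.opNorm_le_bound _
    (mul_nonneg p.cast_nonneg (cauchyKernel_pos p y).le) fun z ↦ ?_
  calc ‖fderiv ℝ (cauchyKernel p) y z‖ = 2 * p * |⟪y, z⟫| * cauchyKernel (p + 1) y := by
        rw [fderiv_cauchyKernel_apply, norm_neg, Real.norm_eq_abs, abs_mul, abs_mul,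
          abs_of_nonneg hJ, abs_of_nonneg (by positivity : 0 ≤ 2 * (p : ℝ))]
    _ ≤ 2 * p * (‖y‖ * ‖z‖) * cauchyKernel (p + 1) y := by
        gcongr
        exact abs_real_inner_le_norm y z
    _ = p * (2 * ‖y‖ * cauchyKernel (p + 1) y) * ‖z‖ := by ring
    _ ≤ p * cauchyKernel p y * ‖z‖ := by
        gcongr
        exact two_mul_norm_mul_cauchyKernel_succ_le p y

theorem isSlowlyVarying_cauchyKernel (x₀ : V) {ρ : ℝ} (hρ : 0 < ρ) :
    IsSlowlyVarying (fun x ↦ cauchyKernel p (ρ⁻¹ • (x - x₀))) (p / ρ) where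
  contDiff := (contDiff_cauchyKernel (n := 1) p).comp
    ((contDiff_id.sub contDiff_const).const_smul _)
  pos _ := cauchyKernel_pos p _
  norm_fderiv_le x := by
    have hscale : HasFDerivAt (fun x : V ↦ ρ⁻¹ • (x - x₀)) (ρ⁻¹ • ContinuousLinearMap.id ℝ V) x :=
      ((hasFDerivAt_id x).sub_const x₀).const_smul ρ⁻¹
    have hkernel : HasFDerivAt (fun x ↦ cauchyKernel p (ρ⁻¹ • (x - x₀))) _ x :=
      ((contDiff_cauchyKernel (n := 1) p).differentiable one_ne_zero _).hasFDerivAt.comp x hscale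
    rw [hkernel.fderiv, ContinuousLinearMap.comp_smul, ContinuousLinearMap.comp_id, norm_smul,
      Real.norm_of_nonneg (inv_nonneg.2 hρ.le)]
    calc ρ⁻¹ * ‖fderiv ℝ (cauchyKernel p) (ρ⁻¹ • (x - x₀))‖
        ≤ ρ⁻¹ * (p * cauchyKernel p (ρ⁻¹ • (x - x₀))) := by
          gcongr
          exact norm_fderiv_cauchyKernel_le p _
      _ = _ := by ring

variable {p}

theorem divergence_cauchyKernel_smul_gradient {v : E → ℝ} (hv : ContDiff ℝ 2 v) (x₀ : E)
    (t : ℝ) (y : E) :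
    divergence (fun y ↦ cauchyKernel p y • ∇ v (x₀ + t • y)) y =
      t * (cauchyKernel p y * Δ v (x₀ + t • y)) -
        2 * p * (cauchyKernel (p + 1) y * fderiv ℝ v (x₀ + t • y) y) := by
  have hgrad : Differentiable ℝ (∇ v) := (contDiff_gradient hv).differentiable one_ne_zero
  have hDv : Differentiable ℝ (fderiv ℝ v) :=
    (hv.fderiv_right (m := 1) le_rfl).differentiable one_ne_zero
  have hcomp : DifferentiableAt ℝ (fun y ↦ ∇ v (x₀ + t • y)) y :=
    (hgrad _).fun_comp' y (by fun_prop)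
  rw [divergence_smul ((contDiff_cauchyKernel (n := 1) p).differentiable one_ne_zero y)
      hcomp,
    divergence_comp_add_smul hgrad, divergence_gradient (hDv _), fderiv_cauchyKernel_apply,
    real_inner_comm, inner_gradient_left]
  ring

variable [MeasurableSpace E] [BorelSpace E]

theorem integrable_cauchyKernel (hp : Module.finrank ℝ E < 2 * p) :
    Integrable (cauchyKernel p : E → ℝ) := by
  refine (integrable_rpow_neg_one_add_norm_sq (E := E) (μ := volume) (r := (2 * p : ℕ))
    (by exact_mod_cast hp)).congr (ae_of_all _ fun y ↦ ?_)
  have hexp : -((2 * p : ℕ) : ℝ) / 2 = -(p : ℝ) := by push_cast; ring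
  simp only [cauchyKernel, hexp]
  rw [Real.rpow_neg (by positivity), Real.rpow_natCast]

theorem integral_cauchyKernel_pos (hp : Module.finrank ℝ E < 2 * p) :
    0 < ∫ y : E, cauchyKernel p y := by
  rw [integral_pos_iff_support_of_nonneg (fun y ↦ (cauchyKernel_pos p y).le)
    (integrable_cauchyKernel hp), Function.support_eq_univ fun y ↦ (cauchyKernel_pos p y).ne']
  exact Measure.measure_univ_pos.2 (NeZero.ne _)

end Kernel

section MeanValue

variable [MeasurableSpace E] [BorelSpace E] {v k : E → ℝ} {p : ℕ}

theorem integral_comp_add_smul (h : E → ℝ) (x₀ : E) {ρ : ℝ} (hρ : 0 ≤ ρ) :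
    ∫ y, h (x₀ + ρ • y) = (ρ ^ Module.finrank ℝ E)⁻¹ * ∫ x, h x := by
  rw [Measure.integral_comp_smul_of_nonneg volume (fun z ↦ h (x₀ + z)) ρ (hR := hρ),
    integral_add_left_eq_self, smul_eq_mul]

theorem hasDerivAt_integral_mul_comp_add_smul (hk : Continuous k) (hkint : Integrable k)
    (hkint₁ : Integrable fun y ↦ ‖y‖ * k y) (hk₀ : ∀ y, 0 ≤ k y) (hv : ContDiff ℝ 1 v)
    (hsupp : HasCompactSupport v) (x₀ : E) (t : ℝ) :
    Integrable (fun y ↦ k y * fderiv ℝ v (x₀ + t • y) y) ∧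
      HasDerivAt (fun s : ℝ ↦ ∫ y, k y * v (x₀ + s • y))
        (∫ y, k y * fderiv ℝ v (x₀ + t • y) y) t := by
  have hvc := hv.continuous
  have hDv := hv.continuous_fderiv one_ne_zero
  obtain ⟨M, hM⟩ := hvc.bounded_above_of_compact_support hsupp
  obtain ⟨M', hM'⟩ := hDv.bounded_above_of_compact_support (hsupp.fderiv ℝ)
  have hF (s : ℝ) : Continuous fun y ↦ k y * v (x₀ + s • y) := by fun_prop
  have hF' : Continuous fun y ↦ k y * fderiv ℝ v (x₀ + t • y) y :=
    hk.mul ((hDv.comp (by fun_prop)).clm_apply continuous_id)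
  refine hasDerivAt_integral_of_dominated_loc_of_deriv_le (s := univ)
    (F := fun s y ↦ k y * v (x₀ + s • y)) (F' := fun s y ↦ k y * fderiv ℝ v (x₀ + s • y) y)
    (bound := fun y ↦ M' * (‖y‖ * k y)) univ_mem
    (Eventually.of_forall fun s ↦ (hF s).aestronglyMeasurable)
    ((hkint.const_mul M).mono' (hF t).aestronglyMeasurable (ae_of_all _ fun y ↦ ?_))
    hF'.aestronglyMeasurable (ae_of_all _ fun y s _ ↦ ?_) (hkint₁.const_mul M')
    (ae_of_all _ fun y s _ ↦ ?_)
  · rw [norm_mul, Real.norm_of_nonneg (hk₀ y), mul_comm]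
    exact mul_le_mul_of_nonneg_right (hM _) (hk₀ y)
  · calc ‖k y * fderiv ℝ v (x₀ + s • y) y‖ = k y * ‖fderiv ℝ v (x₀ + s • y) y‖ := by
          rw [norm_mul, Real.norm_of_nonneg (hk₀ y)]
      _ ≤ k y * (M' * ‖y‖) := mul_le_mul_of_nonneg_left
          ((fderiv ℝ v _).le_of_opNorm_le_of_le (hM' _) le_rfl) (hk₀ y)
      _ = M' * (‖y‖ * k y) := by ring
  · have hline : HasDerivAt (fun s : ℝ ↦ x₀ + s • y) y s := by
      simpa using ((hasDerivAt_id s).smul_const y).const_add x₀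
    exact ((hv.differentiable one_ne_zero _).hasFDerivAt.comp_hasDerivAt s hline).const_mul (k y)

theorem neg_le_integral_cauchyKernel_mul_fderiv (hp : Module.finrank ℝ E < 2 * p)
    (hv : ContDiff ℝ 2 v) (hsupp : HasCompactSupport v) {Λ : ℝ} (hΛ : ∀ x, -Λ ≤ Δ v x)
    (x₀ : E) {t : ℝ} (ht : 0 < t)
    (hint : Integrable fun y ↦ cauchyKernel (p + 1) y * fderiv ℝ v (x₀ + t • y) y) :
    -(t * Λ) * (∫ y : E, cauchyKernel p y) ≤
      2 * p * ∫ y, cauchyKernel (p + 1) y * fderiv ℝ v (x₀ + t • y) y := by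
  let Y : E → E := fun y ↦ cauchyKernel p y • ∇ v (x₀ + t • y)
  have hY : ContDiff ℝ 1 Y :=
    (contDiff_cauchyKernel (n := 1) p).smul ((contDiff_gradient hv).comp (by fun_prop))
  have hYsupp : HasCompactSupport Y :=
    (((hsupp.fderiv ℝ).comp_left (map_zero (toDual ℝ E).symm)).comp_homeomorph
      ((Homeomorph.smulOfNeZero t ht.ne').trans (Homeomorph.addLeft x₀))).smul_left
  calc -(t * Λ) * (∫ y : E, cauchyKernel p y)
      = ∫ y : E, -(t * Λ) * cauchyKernel p y := (integral_const_mul _ _).symm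
    _ ≤ ∫ y, (divergence Y y + 2 * p * (cauchyKernel (p + 1) y * fderiv ℝ v (x₀ + t • y) y)) := by
        refine integral_mono ((integrable_cauchyKernel hp).const_mul _)
          ((integrable_divergence hY hYsupp).add (hint.const_mul _)) fun y ↦ ?_
        have hΔ := mul_le_mul_of_nonneg_left (hΛ (x₀ + t • y))
          (mul_nonneg ht.le (cauchyKernel_pos p y).le)
        simp only [Y, divergence_cauchyKernel_smul_gradient hv]
        linarith
    _ = 2 * p * ∫ y, cauchyKernel (p + 1) y * fderiv ℝ v (x₀ + t • y) y := by
        rw [integral_add (integrable_divergence hY hYsupp) (hint.const_mul _),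
          integral_divergence_eq_zero hY hYsupp, zero_add, integral_const_mul]

theorem mul_integral_cauchyKernel_le (hp : Module.finrank ℝ E < 2 * p)
    (hv : ContDiff ℝ 2 v) (hsupp : HasCompactSupport v) {Λ : ℝ} (hΛ : ∀ x, -Λ ≤ Δ v x)
    (x₀ : E) {ρ : ℝ} (hρ : 0 ≤ ρ) :
    v x₀ * ∫ y : E, cauchyKernel (p + 1) y ≤ (∫ y, cauchyKernel (p + 1) y * v (x₀ + ρ • y)) +
      ρ ^ 2 * (Λ / (4 * p) * ∫ y : E, cauchyKernel p y) := by
  set I := ∫ y : E, cauchyKernel p y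
  have hp₀ : (0 : ℝ) < p := by exact_mod_cast (by omega : 0 < p)
  have hkint₁ : Integrable fun y : E ↦ ‖y‖ * cauchyKernel (p + 1) y := by
    refine (integrable_cauchyKernel hp).mono' (continuous_norm.mul
      (contDiff_cauchyKernel (n := 0) _).continuous).aestronglyMeasurable (ae_of_all _ fun y ↦ ?_)
    have hJ := mul_nonneg (norm_nonneg y) (cauchyKernel_pos (p + 1) y).le
    rw [Real.norm_of_nonneg hJ]
    linarith [two_mul_norm_mul_cauchyKernel_succ_le p y]
  have hderiv (t : ℝ) := hasDerivAt_integral_mul_comp_add_smul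
    (contDiff_cauchyKernel (n := 0) (p + 1)).continuous (integrable_cauchyKernel (by omega)) hkint₁
    (fun y ↦ (cauchyKernel_pos _ y).le) (hv.of_le one_le_two) hsupp x₀ t
  let G : ℝ → ℝ := fun t ↦
    (∫ y, cauchyKernel (p + 1) y * v (x₀ + t • y)) + t ^ 2 * (Λ / (4 * p) * I)
  have hG (t : ℝ) : HasDerivAt G ((∫ y, cauchyKernel (p + 1) y * fderiv ℝ v (x₀ + t • y) y) +
      2 * t * (Λ / (4 * p) * I)) t := by
    have hsq : HasDerivAt (fun t : ℝ ↦ t ^ 2) (2 * t) t := by simpa using hasDerivAt_pow 2 t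
    exact (hderiv t).2.fun_add (hsq.mul_const _)
  have hmono : MonotoneOn G (Icc 0 ρ) := by
    refine monotoneOn_of_deriv_nonneg (convex_Icc _ _)
      (fun t _ ↦ (hG t).continuousAt.continuousWithinAt)
      (fun t _ ↦ (hG t).differentiableAt.differentiableWithinAt) fun t ht ↦ ?_
    rw [interior_Icc] at ht
    have hlower := neg_le_integral_cauchyKernel_mul_fderiv hp hv hsupp hΛ x₀ ht.1 (hderiv t).1
    rw [(hG t).deriv]
    field_simp
    linarith
  have hle : G 0 ≤ G ρ := hmono (left_mem_Icc.2 hρ) (right_mem_Icc.2 hρ) hρ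
  simpa [G, integral_mul_const, mul_comm (v x₀)] using hle

end MeanValue

section Supremum

variable [MeasurableSpace E] [BorelSpace E] {X : E → E} {w v : E → ℝ} {A K s : ℝ} {S : Set E}
  {p : ℕ}

variable (E A p) in
/-- The constant in the maximum bound for subsolutions: the first factor comes from the energy
estimate for a transversal field with bound `A`, the second from the mean value inequality with the
kernel `cauchyKernel (p + 1)`. -/
def subsolutionConst : ℝ :=
  (2 + A + 3 * A ^ 2) * (4 + (p + 1) ^ 2 / (2 * p) *
    ((∫ y : E, cauchyKernel p y) / ∫ y : E, cauchyKernel (p + 1) y))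

theorem subsolutionConst_pos (p : ℕ) (hA : 0 ≤ A) : 0 < subsolutionConst E A p := by
  have hI (m : ℕ) : 0 ≤ ∫ y : E, cauchyKernel m y :=
    integral_nonneg fun y ↦ (cauchyKernel_pos m y).le
  exact mul_pos (by positivity) (add_pos_of_pos_of_nonneg four_pos
    (mul_nonneg (by positivity) (div_nonneg (hI p) (hI (p + 1)))))

theorem le_of_hasCompactSupport (hp : Module.finrank ℝ E < 2 * p) (hS : IsOpen S)
    (hw : ContDiffOn ℝ 1 w S) (hX : IsTransversalOn X w A S) (hv : ContDiff ℝ 2 v)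
    (hsupp : HasCompactSupport v) (hvS : tsupport v ⊆ S) (hv₀ : ∀ x, 0 ≤ v x) (hK : 0 ≤ K)
    (hs₀ : 0 < s) (hs₁ : s ≤ 1) (hsub : IsSubsolutionOn (s ^ 2) (fun x ↦ w x ^ 2) K v S) (x₀ : E) :
    v x₀ ≤ subsolutionConst E A p * (K / s) := by
  have hA := hX.nonneg
  set C := 2 + A + 3 * A ^ 2 with hC
  have hC₀ : 0 < C := by positivity
  have hp₀ : (0 : ℝ) < p := by exact_mod_cast (by omega : 0 < p)
  set ρ := √(2 * C * (p + 1) ^ 2 * s)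
  have hρ₀ : 0 < ρ := by positivity
  have hρ₂ : ρ ^ 2 = 2 * C * (p + 1) ^ 2 * s := Real.sq_sqrt (by positivity)
  let k : E → ℝ := fun x ↦ cauchyKernel (p + 1) (ρ⁻¹ • (x - x₀))
  have hunscale (y : E) : k (x₀ + ρ • y) = cauchyKernel (p + 1) y := by
    simp [k, smul_smul, hρ₀.ne']
  have hk : IsSlowlyVarying k ((p + 1 : ℕ) / ρ) := isSlowlyVarying_cauchyKernel (p + 1) x₀ hρ₀
  have hκ : C * (s * (((p + 1 : ℕ) : ℝ) / ρ) ^ 2) ≤ 1 / 2 := by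
    rw [div_pow, hρ₂]
    push_cast
    field_simp
    norm_num
  have hJint : Integrable (cauchyKernel (p + 1) : E → ℝ) := integrable_cauchyKernel (by omega)
  have hJpos : 0 < ∫ y : E, cauchyKernel (p + 1) y := integral_cauchyKernel_pos (by omega)
  have hkint : Integrable k := (hJint.comp_smul (inv_ne_zero hρ₀.ne')).comp_sub_right x₀
  have haverage : ∫ y, cauchyKernel (p + 1) y * v (x₀ + ρ • y) ≤
      4 * C * K / s * ∫ y : E, cauchyKernel (p + 1) y := by
    have henergy := integral_weight_mul_le hS hw hX hk hkint hv hsupp hvS hv₀ hK hs₀ hs₁ hκ hsub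
    simp only [← hunscale]
    rw [integral_comp_add_smul (fun x ↦ k x * v x) x₀ hρ₀.le, integral_comp_add_smul k x₀ hρ₀.le,
      mul_left_comm]
    gcongr
  have hmean := mul_integral_cauchyKernel_le hp hv hsupp
    (hsub.neg_div_le_laplacian hvS hv₀ hK (pow_pos hs₀ 2) fun x ↦ sq_nonneg (w x)) x₀ hρ₀.le
  refine le_of_mul_le_mul_right (hmean.trans ((add_le_add_left haverage _).trans_eq ?_)) hJpos
  rw [hρ₂, subsolutionConst, ← hC]
  field_simp
  ring

end Supremum

section Truncation

theorem hasDerivAt_max_zero_pow (n : ℕ) (t : ℝ) :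
    HasDerivAt (fun t : ℝ ↦ max t 0 ^ (n + 2)) ((n + 2) * max t 0 ^ (n + 1)) t := by
  have hpow : HasDerivAt (fun t : ℝ ↦ t ^ (n + 2)) ((n + 2) * t ^ (n + 1)) t := by
    simpa using hasDerivAt_pow (n + 2) t
  rcases lt_trichotomy t 0 with ht | rfl | ht
  · have hzero : (fun t : ℝ ↦ max t 0 ^ (n + 2)) =ᶠ[𝓝 t] fun _ ↦ 0 := by
      filter_upwards [eventually_lt_nhds ht] with y hy
      simp [max_eq_right hy.le]
    simpa [max_eq_right ht.le] using (hasDerivAt_const t (0 : ℝ)).congr_of_eventuallyEq hzero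
  · have hneg : HasDerivWithinAt (fun t : ℝ ↦ max t 0 ^ (n + 2)) 0 (Iic 0) 0 :=
      (hasDerivWithinAt_const (0 : ℝ) (Iic 0) (0 : ℝ)).congr (fun y hy ↦ by simp [mem_Iic.1 hy])
        (by simp)
    have hnonneg : HasDerivWithinAt (fun t : ℝ ↦ max t 0 ^ (n + 2)) 0 (Ici 0) 0 := by
      refine HasDerivWithinAt.congr (f := fun t ↦ t ^ (n + 2)) ?_
        (fun y hy ↦ by simp [mem_Ici.1 hy]) (by simp)
      simpa using hpow.hasDerivWithinAt
    simpa [Iic_union_Ici] using hneg.union hnonneg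
  · have hid : (fun t : ℝ ↦ max t 0 ^ (n + 2)) =ᶠ[𝓝 t] fun t ↦ t ^ (n + 2) := by
      filter_upwards [eventually_gt_nhds ht] with y hy
      simp [max_eq_left hy.le]
    simpa [max_eq_left ht.le] using hpow.congr_of_eventuallyEq hid

theorem contDiff_max_zero_pow (n : ℕ) : ContDiff ℝ n fun t : ℝ ↦ max t 0 ^ (n + 1) := by
  induction n with
  | zero => exact contDiff_zero.2 (by fun_prop)
  | succ n ih =>
    push_cast
    refine contDiff_succ_iff_deriv.2
      ⟨fun t ↦ (hasDerivAt_max_zero_pow n t).differentiableAt, by simp, ?_⟩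
    rw [funext fun t ↦ (hasDerivAt_max_zero_pow n t).deriv]
    exact contDiff_const.mul ih

theorem contDiff_indicator_of_tsupport_subset {V W : Type*} [NormedAddCommGroup V]
    [NormedSpace ℝ V] [NormedAddCommGroup W] [NormedSpace ℝ W] {n : WithTop ℕ∞} {f : V → W}
    {S : Set V} (hS : IsOpen S) (hf : ContDiffOn ℝ n f S) (hsupp : tsupport (S.indicator f) ⊆ S) :
    ContDiff ℝ n (S.indicator f) := by
  refine contDiff_iff_contDiffAt.2 fun x ↦ ?_
  by_cases hx : x ∈ S
  · exact (hf.contDiffAt (hS.mem_nhds hx)).congr_of_eventuallyEq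
      (eqOn_indicator.eventuallyEq_of_mem (hS.mem_nhds hx))
  · exact contDiffAt_const.congr_of_eventuallyEq
      (notMem_tsupport_iff_eventuallyEq.1 fun h ↦ hx (hsupp h))

theorem tsupport_indicator_comp_subset {α : Type*} [TopologicalSpace α] {S : Set α} {φ : α → ℝ}
    {h : ℝ → ℝ} {δ : ℝ} (hφ : ContinuousOn φ (closure S)) (hφ₀ : ∀ x ∈ frontier S, φ x < δ)
    (hh : ∀ t < δ, h t = 0) : tsupport (S.indicator (h ∘ φ)) ⊆ S := by
  have hclosed : IsClosed (closure S ∩ φ ⁻¹' Ici δ) :=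
    hφ.preimage_isClosed_of_isClosed isClosed_closure isClosed_Ici
  refine (closure_minimal (fun x hx ↦ ?_) hclosed).trans fun x hx ↦ ?_
  · obtain ⟨hxS, hx₀⟩ := Set.indicator_apply_ne_zero.1 hx
    exact ⟨subset_closure hxS, not_lt.1 fun hlt ↦ hx₀ (hh _ hlt)⟩
  · by_contra hxS
    exact (hφ₀ x ⟨hx.1, fun hint ↦ hxS (interior_subset hint)⟩).not_ge hx.2

variable {a K L : ℝ} {q u v : E → ℝ} {h : ℝ → ℝ} {S : Set E}

theorem IsSubsolutionOn.congr (hsub : IsSubsolutionOn a q K u S) (hS : IsOpen S)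
    (huv : EqOn v u S) : IsSubsolutionOn a q K v S := fun x hx ↦ by
  rw [huv hx, (laplacian_congr_nhds (huv.eventuallyEq_of_mem (hS.mem_nhds hx))).eq_of_nhds]
  exact hsub x hx

theorem IsSubsolutionOn.comp (hsub : IsSubsolutionOn a q K u S) (hS : IsOpen S)
    (hu : ContDiffOn ℝ 2 u S) (hh : ContDiff ℝ 2 h) (ha : 0 ≤ a) (hq : ∀ x, 0 ≤ q x) (hK : 0 ≤ K)
    (hconv : ∀ t, 0 ≤ deriv (deriv h) t) (hmono : ∀ t, 0 ≤ deriv h t)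
    (hle : ∀ t, h t ≤ t * deriv h t) (hL : ∀ x ∈ S, deriv h (u x) ≤ L) :
    IsSubsolutionOn a q (L * K) (h ∘ u) S := fun x hx ↦ by
  rw [laplacian_comp hh (hu.contDiffAt (hS.mem_nhds hx))]
  calc -a * (deriv (deriv h) (u x) * ‖fderiv ℝ u x‖ ^ 2 + deriv h (u x) * Δ u x) + q x * h (u x)
      ≤ -a * (deriv h (u x) * Δ u x) + q x * (u x * deriv h (u x)) := by
        have hgrad := mul_nonneg ha (mul_nonneg (hconv (u x)) (sq_nonneg ‖fderiv ℝ u x‖))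
        have hpot := mul_le_mul_of_nonneg_left (hle (u x)) (hq x)
        linarith
    _ = deriv h (u x) * (-a * Δ u x + q x * u x) := by ring
    _ ≤ deriv h (u x) * K := mul_le_mul_of_nonneg_left (hsub x hx) (hmono _)
    _ ≤ L * K := mul_le_mul_of_nonneg_right (hL x hx) hK

theorem IsSubsolutionOn.truncate {δ M : ℝ} (hsub : IsSubsolutionOn a q K u S) (hS : IsOpen S)
    (hu : ContDiffOn ℝ 2 u S) (ha : 0 ≤ a) (hq : ∀ x, 0 ≤ q x) (hK : 0 ≤ K) (hδ : 0 ≤ δ)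
    (hM : δ ≤ M) (huM : ∀ x ∈ S, u x ≤ M) :
    IsSubsolutionOn a q (3 * (M - δ) ^ 2 * K) (fun x ↦ max (u x - δ) 0 ^ 3) S := by
  let h : ℝ → ℝ := fun t ↦ max (t - δ) 0 ^ 3
  have hh : ContDiff ℝ 2 h := (contDiff_max_zero_pow 2).comp (contDiff_id.sub contDiff_const)
  have hderiv : deriv h = fun t ↦ 3 * max (t - δ) 0 ^ 2 := funext fun t ↦ by
    have hcube := ((hasDerivAt_max_zero_pow 1 (t - δ)).comp_sub_const t δ).deriv
    norm_num at hcube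
    exact hcube
  have hderiv₂ (t : ℝ) : deriv (deriv h) t = 6 * max (t - δ) 0 := by
    have hsquare := ((hasDerivAt_max_zero_pow 0 (t - δ)).comp_sub_const t δ).deriv
    norm_num at hsquare
    norm_num [hderiv, hsquare]
    ring
  refine hsub.comp (h := h) hS hu hh ha hq hK (fun t ↦ ?_) (fun t ↦ ?_) (fun t ↦ ?_) fun x hx ↦ ?_
  · rw [hderiv₂]
    positivity
  · rw [hderiv]
    positivity
  · simp only [hderiv, h]
    rcases le_total (t - δ) 0 with ht | ht
    · simp [max_eq_right ht]
    · rw [max_eq_left ht]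
      nlinarith [mul_nonneg (sq_nonneg (t - δ)) (by linarith : 0 ≤ 2 * t + δ)]
  · simp only [hderiv]
    gcongr
    exact max_le (by linarith [huM x hx]) (by linarith)

end Truncation

section MaximumBound

variable [MeasurableSpace E] [BorelSpace E] {X : E → E} {w φ : E → ℝ} {A K s : ℝ} {S : Set E}
  {p : ℕ}

theorem IsSubsolutionOn.le_of_frontier_nonpos
    (hsub : IsSubsolutionOn (s ^ 2) (fun x ↦ w x ^ 2) K φ S) (hp : Module.finrank ℝ E < 2 * p)
    (hS : IsOpen S) (hbdd : Bornology.IsBounded S) (hw : ContDiffOn ℝ 1 w S)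
    (hX : IsTransversalOn X w A S) (hφ : ContDiffOn ℝ 2 φ S) (hφc : ContinuousOn φ (closure S))
    (hφ₀ : ∀ x ∈ frontier S, φ x ≤ 0) (hK : 0 ≤ K) (hs₀ : 0 < s) (hs₁ : s ≤ 1)
    {x : E} (hx : x ∈ S) : φ x ≤ 6 * subsolutionConst E A p * (K / s) := by
  set C := subsolutionConst E A p
  have hcompact : IsCompact (closure S) := hbdd.isCompact_closure
  obtain ⟨z, hz, hmax⟩ := hcompact.exists_isMaxOn ⟨x, subset_closure hx⟩ hφc
  refine (hmax (subset_closure hx)).trans ?_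
  rcases le_or_gt (φ z) 0 with hM | hM
  · exact hM.trans (mul_nonneg (mul_nonneg (by simp) (subsolutionConst_pos p hX.nonneg).le)
      (div_nonneg hK hs₀.le))
  set M := φ z
  have hzS : z ∈ S := by
    by_contra h
    exact (hφ₀ z ⟨hz, fun hint ↦ h (interior_subset hint)⟩).not_gt hM
  let h : ℝ → ℝ := fun t ↦ max (t - M / 2) 0 ^ 3
  let v : E → ℝ := S.indicator (h ∘ φ)
  have hvφ : EqOn v (h ∘ φ) S := eqOn_indicator
  have hvS : tsupport v ⊆ S :=
    tsupport_indicator_comp_subset hφc (fun x hx ↦ (hφ₀ x hx).trans_lt (half_pos hM)) fun t ht ↦ by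
      simp [h, ht.le]
  have hsupp : HasCompactSupport v :=
    hcompact.of_isClosed_subset (isClosed_tsupport v) (hvS.trans subset_closure)
  have hv : ContDiff ℝ 2 v := contDiff_indicator_of_tsupport_subset hS
    (((contDiff_max_zero_pow 2).comp (contDiff_id.sub contDiff_const)).comp_contDiffOn hφ) hvS
  have hv₀ (x : E) : 0 ≤ v x := indicator_nonneg (fun _ _ ↦ pow_nonneg (le_max_right _ _) 3) x
  have hvsub : IsSubsolutionOn (s ^ 2) (fun x ↦ w x ^ 2) (3 * (M - M / 2) ^ 2 * K) v S :=
    (hsub.truncate hS hφ (by positivity) (fun x ↦ sq_nonneg _) hK (half_pos hM).le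
      (half_le_self hM.le) fun x hx ↦ hmax (subset_closure hx)).congr hS hvφ
  have hbound := le_of_hasCompactSupport hp hS hw hX hv hsupp hvS hv₀ (by positivity) hs₀ hs₁
    hvsub z
  have hvz : v z = (M / 2) ^ 3 := by
    rw [hvφ hzS]
    simp only [h, Function.comp_apply]
    rw [max_eq_left (by linarith)]
    ring
  rw [hvz] at hbound
  refine le_of_mul_le_mul_right ?_ (by positivity : 0 < M ^ 2 / 8)
  calc M * (M ^ 2 / 8) = (M / 2) ^ 3 := by ring
    _ ≤ _ := hbound
    _ = _ := by ring

theorem IsTransversalOn.abs_le_of_frontier_eq_zero (hX : IsTransversalOn X w A S)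
    (hp : Module.finrank ℝ E < 2 * p) (hS : IsOpen S) (hbdd : Bornology.IsBounded S)
    (hw : ContDiffOn ℝ 1 w S) (hφ : ContDiffOn ℝ 2 φ S) (hφc : ContinuousOn φ (closure S))
    (hφ₀ : ∀ x ∈ frontier S, φ x = 0) (hs₀ : 0 < s) (hs₁ : s ≤ 1)
    (hK : ∀ x ∈ S, |-s ^ 2 * Δ φ x + w x ^ 2 * φ x| ≤ K) {x : E} (hx : x ∈ S) :
    |φ x| ≤ 6 * subsolutionConst E A p * (K / s) := by
  have hK₀ : 0 ≤ K := (abs_nonneg _).trans (hK x hx)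
  have hsub : IsSubsolutionOn (s ^ 2) (fun x ↦ w x ^ 2) K φ S := fun y hy ↦
    (abs_le.1 (hK y hy)).2
  have hsub_neg : IsSubsolutionOn (s ^ 2) (fun x ↦ w x ^ 2) K (-φ) S := fun y hy ↦ by
    rw [laplacian_neg, Pi.neg_apply, Pi.neg_apply]
    linarith [(abs_le.1 (hK y hy)).1]
  refine abs_le'.2 ⟨?_, ?_⟩
  · exact hsub.le_of_frontier_nonpos hp hS hbdd hw hX hφ hφc (fun y hy ↦ (hφ₀ y hy).le) hK₀
      hs₀ hs₁ hx
  · exact hsub_neg.le_of_frontier_nonpos hp hS hbdd hw hX hφ.neg hφc.neg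
      (fun y hy ↦ by simp [hφ₀ y hy]) hK₀ hs₀ hs₁ hx

end MaximumBound

section NontangentialApproach

theorem frequently_frequently_dist_lt_mul_infDist {M : Type*} [MetricSpace M] {U B : Set M}
    (hB : IsCompact B) (hBU : B ⊆ closure U) (hdisj : Disjoint U B) {c : ℝ} (hc : 1 < c) {b : M}
    (hb : b ∈ B) :
    ∃ᶠ b' in 𝓝[B] b, ∃ᶠ x in 𝓝[U] b', dist x b' < c * infDist x B := by
  have : CompactSpace B := isCompact_iff_compactSpace.1 hB
  -- At a fixed scale the good centers form an open set containing the feet in `B` of points of `U`,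
  -- hence a dense set; Baire's theorem handles all scales at once.
  let G : ℕ → Set B := fun n ↦
    {b' | ∃ x ∈ U, dist x b' < 1 / ((n : ℝ) + 1) ∧ dist x b' < c * infDist x B}
  have hopen (n : ℕ) : IsOpen (G n) := by
    simp only [G, ofPred_exists, ofPred_and]
    refine isOpen_iUnion fun x ↦ isOpen_const.inter
      ((isOpen_lt ?_ continuous_const).inter (isOpen_lt ?_ continuous_const)) <;> fun_prop
  have hdense (n : ℕ) : Dense (G n) := by
    refine Metric.dense_iff.2 fun b' r hr ↦ ?_
    obtain ⟨x, hxU, hx⟩ := Metric.mem_closure_iff.1 (hBU b'.2) (min (r / 2) (1 / ((n : ℝ) + 1)))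
      (by positivity)
    obtain ⟨foot, hfoot, hdist⟩ := hB.exists_infDist_eq_dist ⟨b, hb⟩ x
    have hpos : 0 < infDist x B := (hB.isClosed.notMem_iff_infDist_pos ⟨b, hb⟩).1
      (disjoint_left.1 hdisj hxU)
    have hle : infDist x B ≤ dist (b' : M) x := dist_comm x b' ▸ infDist_le_dist_of_mem b'.2
    obtain ⟨hxr, hxn⟩ := lt_min_iff.1 hx
    refine ⟨⟨foot, hfoot⟩, ?_, x, hxU, ?_, ?_⟩
    · rw [mem_ball, Subtype.dist_eq]
      linarith [dist_triangle foot x b', dist_comm foot x, dist_comm x b']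
    · exact hdist ▸ hle.trans_lt hxn
    · exact hdist ▸ lt_mul_of_one_lt_left hpos hc
  have hgood : ∃ᶠ b' : B in 𝓝 ⟨b, hb⟩, b' ∈ ⋂ n, G n :=
    mem_closure_iff_frequently.1 (dense_iInter_of_isOpen_nat hopen hdense _)
  rw [nhdsWithin_eq_map_subtype_coe hb]
  refine frequently_map.2 (hgood.mono fun b' hb' ↦ ?_)
  refine (nhdsWithin_basis_ball.frequently_iff).2 fun r hr ↦ ?_
  obtain ⟨n, hn⟩ := exists_nat_one_div_lt hr
  obtain ⟨x, hxU, hxn, hx⟩ := mem_iInter.1 hb' n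
  exact ⟨x, ⟨hxn.trans hn, hxU⟩, hx⟩

theorem le_norm_of_frequently_mul_dist_le {V W : Type*} [NormedAddCommGroup V] [NormedSpace ℝ V]
    [NormedAddCommGroup W] [NormedSpace ℝ W] {f : V → W} {f' : V →L[ℝ] W} {s : Set V} {b : V}
    {c : ℝ} (hf : HasFDerivWithinAt f f' s b)
    (hfreq : ∃ᶠ x in 𝓝[s \ {b}] b, c * dist x b ≤ dist (f x) (f b)) : c ≤ ‖f'‖ := by
  refine le_of_forall_pos_le_add fun η hη ↦ ?_
  have hlin := (hasFDerivWithinAt_iff_isLittleO.1 hf).def hη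
  obtain ⟨x, hgrowth, happrox, -, hne⟩ :=
    (hfreq.and_eventually ((hlin.filter_mono (nhdsWithin_mono b sdiff_subset)).and
      self_mem_nhdsWithin)).exists
  refine le_of_mul_le_mul_right ?_ (norm_pos_iff.2 (sub_ne_zero.2 hne))
  calc c * ‖x - b‖ ≤ ‖f x - f b‖ := by simpa only [dist_eq_norm] using hgrowth
    _ ≤ ‖f' (x - b)‖ + ‖f x - f b - f' (x - b)‖ := norm_le_norm_add_norm_sub' _ _
    _ ≤ ‖f'‖ * ‖x - b‖ + η * ‖x - b‖ := add_le_add (f'.le_opNorm _) happrox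
    _ = (‖f'‖ + η) * ‖x - b‖ := by ring

end NontangentialApproach

section TransversalField

variable {V : Type*} [NormedAddCommGroup V] [NormedSpace ℝ V] {w : V → ℝ} {U B : Set V} {c d : ℝ}
  {b : V}

theorem div_two_le_norm_of_hopf {f' : V → V →L[ℝ] ℝ} (hU : IsOpen U) (hBU : B ⊆ frontier U)
    (hB : IsCompact B) (hwB : ∀ x ∈ B, w x = 0) (hd : 0 < d) (hc : 0 ≤ c)
    (hhopf : ∀ x ∈ U, infDist x B < d → c * infDist x B ≤ w x) (hb : b ∈ B)
    (hderiv : ∀ᶠ y in 𝓝[closure U] b, HasFDerivWithinAt w (f' y) (closure U) y)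
    (hcont : ContinuousWithinAt f' (closure U) b) : c / 2 ≤ ‖f' b‖ := by
  have hBcl : B ⊆ closure U := hBU.trans frontier_subset_closure
  have hdisj : Disjoint U B := (disjoint_frontier_iff_isOpen.2 hU).symm.mono_right hBU
  have hfreq : ∃ᶠ b' in 𝓝[B] b, c / 2 ≤ ‖f' b'‖ := by
    refine ((frequently_frequently_dist_lt_mul_infDist hB hBcl hdisj one_lt_two hb).and_eventually
      ((hderiv.filter_mono (nhdsWithin_mono b hBcl)).and self_mem_nhdsWithin)).mono ?_
    rintro b' ⟨happroach, hb'deriv, hb'⟩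
    refine le_norm_of_frequently_mul_dist_le (hb'deriv.mono subset_closure) ?_
    rw [sdiff_singleton_eq_self (disjoint_right.1 hdisj hb')]
    have hnear : ∀ᶠ x in 𝓝[U] b', infDist x B < d := nhdsWithin_le_nhds <|
      (continuous_infDist_pt B).tendsto' b' 0 (infDist_zero_of_mem hb') |>.eventually_lt_const hd
    refine (happroach.and_eventually (hnear.and self_mem_nhdsWithin)).mono ?_
    rintro x ⟨hlt, hxd, hxU⟩
    calc c / 2 * dist x b' ≤ c / 2 * (2 * infDist x B) := by gcongr
      _ = c * infDist x B := by ring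
      _ ≤ w x := hhopf x hxU hxd
      _ ≤ dist (w x) (w b') := by
        rw [hwB b' hb', Real.dist_0_eq_abs]
        exact le_abs_self _
  exact ge_of_tendsto_of_frequently (hcont.mono hBcl).norm hfreq

theorem exists_eventually_one_le_fderiv (hU : IsOpen U) (hBU : B ⊆ frontier U)
    (hB : IsCompact B) (hw : ContDiffOn ℝ 1 w (closure U)) (hwB : ∀ x ∈ B, w x = 0) (hd : 0 < d)
    (hc : 0 < c) (hhopf : ∀ x ∈ U, infDist x B < d → c * infDist x B ≤ w x) (hb : b ∈ B) :
    ∃ e, ∀ᶠ y in 𝓝 b, y ∈ U → 1 ≤ fderiv ℝ w y e := by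
  have hbcl : b ∈ closure U := frontier_subset_closure (hBU hb)
  obtain ⟨u, hu, -, -, f', hf', hf'cont⟩ :=
    (contDiffWithinAt_succ_iff_hasFDerivWithinAt' (n := 0) (by simp)).1
      (by simpa using hw b hbcl)
  rw [insert_eq_of_mem hbcl] at hu
  have hderiv : ∀ᶠ y in 𝓝[closure U] b, HasFDerivWithinAt w (f' y) (closure U) y :=
    mem_of_superset hu hf'
  have hf'b : f' b ≠ 0 := norm_pos_iff.1 <| (half_pos hc).trans_le <|
    div_two_le_norm_of_hopf hU hBU hB hwB hd hc.le hhopf hb hderiv hf'cont.continuousWithinAt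
  obtain ⟨e, he⟩ : ∃ e, f' b e = 2 :=
    LinearMap.surjective (f := (f' b).toLinearMap) (mod_cast hf'b) 2
  refine ⟨e, ?_⟩
  have hlarge : ∀ᶠ y in 𝓝[closure U] b, 1 < f' y e :=
    (hf'cont.continuousWithinAt.clm_apply continuousWithinAt_const).eventually_const_lt
      (by simp [he])
  filter_upwards [eventually_nhdsWithin_iff.1 (hlarge.and hderiv)] with y hy hyU
  obtain ⟨hlt, hyderiv⟩ := hy (subset_closure hyU)
  rw [(hyderiv.hasFDerivAt (mem_of_superset (hU.mem_nhds hyU) subset_closure)).fderiv]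
  exact hlt.le

theorem exists_eventually_one_le_fderiv_add (hU : IsOpen U) (hBU : B ⊆ frontier U)
    (hB : IsCompact B) (hBne : B.Nonempty) (hw : ContDiffOn ℝ 1 w (closure U))
    (hwB : ∀ x ∈ B, w x = 0) (hd : 0 < d) (hc : 0 < c)
    (hhopf : ∀ x ∈ U, infDist x B < d → c * infDist x B ≤ w x) :
    ∃ A, 0 ≤ A ∧ ∀ x, ∃ e, ∀ᶠ y in 𝓝 x, y ∈ {x ∈ U | infDist x B < d} →
      1 ≤ fderiv ℝ w y e + A * w y ^ 2 := by
  let O : Set V := {x | ∃ e, ∀ᶠ y in 𝓝 x, y ∈ U → 1 ≤ fderiv ℝ w y e}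
  have hO : IsOpen O := isOpen_iff_mem_nhds.2 fun x ⟨e, he⟩ ↦
    (eventually_eventually_nhds.2 he).mono fun y hy ↦ ⟨e, hy⟩
  obtain ⟨ρ, hρ, hρO⟩ := hB.exists_thickening_subset_open hO fun b hb ↦
    exists_eventually_one_le_fderiv hU hBU hB hw hwB hd hc hhopf hb
  refine ⟨((c * (ρ / 2)) ^ 2)⁻¹, by positivity, fun x ↦ ?_⟩
  by_cases hx : x ∈ O
  · obtain ⟨e, he⟩ := hx
    refine ⟨e, he.mono fun y hy hyS ↦ (hy hyS.1).trans (le_add_of_nonneg_right ?_)⟩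
    positivity
  · have hfar : ρ / 2 < infDist x B := by
      refine (half_lt_self hρ).trans_le (not_lt.1 fun hlt ↦ hx (hρO ?_))
      rwa [mem_thickening_iff_infDist_lt hBne]
    refine ⟨0, ((continuous_infDist_pt B).continuousAt.eventually_const_lt hfar).mono ?_⟩
    intro y hy hyS
    have hwy : c * (ρ / 2) ≤ w y := (by gcongr : c * (ρ / 2) ≤ c * infDist y B).trans
      (hhopf y hyS.1 hyS.2)
    rw [map_zero, zero_add, inv_mul_eq_div, one_le_div (by positivity)]
    gcongr

theorem exists_isTransversalOn {w : E → ℝ} {S : Set E} {A : ℝ} (hS : Bornology.IsBounded S)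
    (hA : 0 ≤ A)
    (hlocal : ∀ x, ∃ e, ∀ᶠ y in 𝓝 x, y ∈ S → 1 ≤ fderiv ℝ w y e + A * w y ^ 2) :
    ∃ X A', IsTransversalOn X w A' S := by
  have hconvex (y : E) : Convex ℝ {e | y ∈ S → 1 ≤ fderiv ℝ w y e + A * w y ^ 2} := by
    intro e he e' he' α β hα hβ hαβ hy
    have h₁ := mul_le_mul_of_nonneg_left (he hy) hα
    have h₂ := mul_le_mul_of_nonneg_left (he' hy) hβ
    simp only [map_add, map_smul, smul_eq_mul]
    obtain rfl : β = 1 - α := by linarith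
    linarith
  obtain ⟨X, hX⟩ := exists_contMDiffMap_forall_mem_convex_of_local_const (n := 1)
    (modelWithCornersSelf ℝ E) hconvex hlocal
  have hXsmooth : ContDiff ℝ 1 X := X.contMDiff.contDiff
  obtain ⟨M₁, hM₁⟩ := hS.isCompact_closure.exists_bound_of_continuousOn
    hXsmooth.continuous.continuousOn
  obtain ⟨M₂, hM₂⟩ := hS.isCompact_closure.exists_bound_of_continuousOn
    (continuous_divergence hXsmooth).continuousOn
  refine ⟨X, max A (max M₁ M₂), hXsmooth, hA.trans (le_max_left _ _), fun x hx ↦ ?_, fun x hx ↦ ?_,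
    fun x hx ↦ (hX x hx).trans ?_⟩
  · exact (hM₁ x (subset_closure hx)).trans ((le_max_left _ _).trans (le_max_right _ _))
  · exact (hM₂ x (subset_closure hx)).trans ((le_max_right _ _).trans (le_max_right _ _))
  · gcongr
    exact le_max_left _ _

end TransversalField

theorem statement_17_general {U B : Set E} {w : E → ℝ} {d c : ℝ} (hU : IsOpen U)
    (hBU : B ⊆ frontier U) (hB : IsCompact B) (hBne : B.Nonempty)
    (hw : ContDiffOn ℝ 1 w (closure U)) (hwB : ∀ x ∈ B, w x = 0) (hd : 0 < d) (hc : 0 < c)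
    (hhopf : ∀ x ∈ U, infDist x B < d → c * infDist x B ≤ w x) :
    ∃ C : ℝ, 0 < C ∧ ∀ ε ∈ Ioc (0 : ℝ) 1, ∀ φ : E → ℝ,
      ContDiffOn ℝ 2 φ {x ∈ U | infDist x B < d} →
      ContinuousOn φ (closure {x ∈ U | infDist x B < d}) →
      (∀ x ∈ frontier {x ∈ U | infDist x B < d}, φ x = 0) →
      ∀ K : ℝ, (∀ x ∈ {x ∈ U | infDist x B < d}, |-ε ^ 4 * Δ φ x + w x ^ 2 * φ x| ≤ K) →
        ∀ x ∈ {x ∈ U | infDist x B < d}, |φ x| ≤ C * K / ε ^ 2 := by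
  let : MeasurableSpace E := borel E
  have : BorelSpace E := ⟨rfl⟩
  set S := {x ∈ U | infDist x B < d}
  have hS : IsOpen S := hU.inter (isOpen_lt (continuous_infDist_pt B) continuous_const)
  have hbdd : Bornology.IsBounded S := (hB.isBounded.thickening (δ := d)).subset fun x hx ↦
    (mem_thickening_iff_infDist_lt hBne).2 hx.2
  have hwS : ContDiffOn ℝ 1 w S := hw.mono fun x hx ↦ subset_closure hx.1
  obtain ⟨A₀, hA₀, hlocal⟩ :=
    exists_eventually_one_le_fderiv_add hU hBU hB hBne hw hwB hd hc hhopf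
  obtain ⟨X, A, hX⟩ := exists_isTransversalOn hbdd hA₀ hlocal
  let p := Module.finrank ℝ E + 1
  refine ⟨6 * subsolutionConst E A p, mul_pos (by norm_num) (subsolutionConst_pos p hX.nonneg),
    fun ε hε φ hφ hφc hφ₀ K hK x hx ↦ ?_⟩
  rw [mul_div_assoc]
  exact hX.abs_le_of_frontier_eq_zero (by omega) hS hbdd hwS hφ hφc hφ₀ (pow_pos hε.1 2)
    (pow_le_one₀ hε.1.le hε.2) (by simpa only [← pow_mul] using hK) hx

theorem lap_eq_laplacian {N : ℕ} (f : EuclideanSpace ℝ (Fin N) → ℝ) : lap f = Δ f := by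
  funext x
  rw [laplacian_eq_iteratedFDeriv_orthonormalBasis f (EuclideanSpace.basisFun (Fin N) ℝ), lap]
  refine Finset.sum_congr rfl fun i _ ↦ congrArg _ (funext fun j ↦ ?_)
  fin_cases j <;> simp

end

/-- **Lemma A.1, first assertion.** A-priori estimate
`‖φ‖_{L∞(S)} ≤ C ε⁻² ‖g‖_{L∞(S)}` for the Schrödinger operator `-ε⁴Δ + w₁²`
on the boundary strip `S`. -/
theorem statement_17 {N : ℕ}
    (Ω Ω₁ : Set (EuclideanSpace ℝ (Fin N)))
    (hΩ : IsOpen Ω) (hbdd : Bornology.IsBounded Ω)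
    (hΩ₁ : IsOpen Ω₁) (hsub : Ω₁ ⊆ Ω)
    (B : Set (EuclideanSpace ℝ (Fin N)))
    (hB : B = frontier Ω ∩ frontier Ω₁) (hBne : B.Nonempty) (hBcpt : IsCompact B)
    (w₁ : EuclideanSpace ℝ (Fin N) → ℝ)
    (hw₁reg : ContDiffOn ℝ 1 w₁ (closure Ω₁))
    (hw₁pos : ∀ x ∈ Ω₁, 0 < w₁ x)
    (hw₁bc : ∀ x ∈ B, w₁ x = 0)
    (d₁ : ℝ) (hd₁ : 0 < d₁)
    (S : Set (EuclideanSpace ℝ (Fin N)))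
    (hS : S = {x ∈ Ω₁ | Metric.infDist x B < d₁})
    -- `d₁` is small enough that the nearest point projection onto `B` is a
    -- well-defined smooth map on `S`
    (proj : EuclideanSpace ℝ (Fin N) → EuclideanSpace ℝ (Fin N))
    (hproj : ∀ x ∈ S, proj x ∈ B ∧ dist x (proj x) = Metric.infDist x B)
    (hprojC : ContDiffOn ℝ (⊤ : ℕ∞) proj S)
    (c₀ : ℝ) (hc₀ : 0 < c₀)
    (hHopf : ∀ x ∈ S, c₀ * Metric.infDist x B ≤ w₁ x) :
    ∃ ε₀ C : ℝ, 0 < ε₀ ∧ 0 < C ∧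
      ∀ ε ∈ Set.Ioo (0:ℝ) ε₀, ∀ φ g : EuclideanSpace ℝ (Fin N) → ℝ,
        ContDiffOn ℝ 2 φ S → ContinuousOn φ (closure S) → ContinuousOn g S →
        (∀ x ∈ S, - ε ^ 4 * lap φ x + (w₁ x) ^ 2 * φ x = g x) →
        (∀ x ∈ frontier S, φ x = 0) →
        ∀ Kg : ℝ, (∀ x ∈ S, |g x| ≤ Kg) →
          ∀ x ∈ S, |φ x| ≤ C * Kg / ε ^ 2 := by
  subst hS
  obtain ⟨C, hC, hbound⟩ := statement_17_general hΩ₁ (hB.subset.trans inter_subset_right) hBcpt hBne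
    hw₁reg hw₁bc hd₁ hc₀ fun x hx hxd ↦ hHopf x ⟨hx, hxd⟩
  refine ⟨1, C, one_pos, hC, fun ε hε φ g hφ hφc _ heq hφ₀ Kg hg ↦ ?_⟩
  exact hbound ε (Ioo_subset_Ioc_self hε) φ hφ hφc hφ₀ Kg fun x hx ↦ by
    rw [← lap_eq_laplacian, heq x hx]
    exact hg x hx
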